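/- Let n ≥ 2 and for each l ∈ {0,…,n} let v^l be an l-form on ℝⁿ with components in L²_loc. Suppose there exists a graded form g = Σ_{l=0}^n g^l with components in L²_loc such that ∫⟨g, φ⟩dx = ∫⟨Σ_{l=0}^n(−1)^l v^l, (d+δ)φ⟩dx for every graded form φ with smooth compactly supported components (i.e. (d+δ)Σ_{l=0}^n(−1)^l v^l = g in the weak sense). Then every component of every v^l belongs to H¹_loc(ℝⁿ), i.e. has weak first partial derivatives in L²_loc. -/

import Mathlib

/-!
On graded forms `d + δ = Σ_j c_j ∂_j`, where `c_j` is Clifford multiplication by `dx^j`: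
`c_i c_j + c_j c_i = -2 δ_ij`, and each `c_j` is antisymmetric for the bilinear inner product. Hence
`D = d + δ` is formally self-adjoint and `D² = -Δ`. If `D u = g` weakly and `χ` is a cutoff, then
`w = χ u` satisfies `D w = f` with `f = χ g + Σ_j ∂_j χ c_j u` again in `L²`. Applying `D` once more
gives `-Δ w = Σ_k ∂_k (c_k f) ∈ H⁻¹`, so `w ∈ L²` lies in `H¹` by inverting the Bessel potential
`1 - (2π)⁻² Δ`. The weak derivatives obtained for different cutoffs agree almost everywhere where
the cutoffs are `1`, so they glue to weak derivatives of `u`.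
-/

noncomputable section

open MeasureTheory Finset

namespace EMPaper

/-- Points of `ℝⁿ`. -/
abbrev Pt (n : ℕ) := Fin n → ℝ

/-- A graded element of the complexified exterior algebra `Λ ℝⁿ ⊗ ℂ`, encoded by its
coefficients on the basis monomials `dx^{α₁} ∧ ⋯ ∧ dx^{α_l}`, indexed by the set
`{α₁ < ⋯ < α_l} ⊆ Fin n`. -/
abbrev GF (n : ℕ) := Finset (Fin n) → ℂ

/-- A graded differential form on `ℝⁿ`. -/
abbrev Form (n : ℕ) := Pt n → GF n

variable {n : ℕ}

/-- The sign `(-1)^{#{(i,j) ∈ I × J : j < i}}` obtained when merging the increasing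
enumerations of the disjoint sets `I` and `J`. -/
def msgn (I J : Finset (Fin n)) : ℂ :=
  (-1 : ℂ) ^ (((I ×ˢ J).filter fun p => p.2 < p.1).card)

/-- The wedge (exterior) product. -/
def wedge (u v : GF n) : GF n := fun S =>
  ∑ I ∈ S.powerset, msgn I (S \ I) * u I * v (S \ I)

/-- The vee product, determined by `⟨w, v ∨ u⟩ = ⟨w ∧ v, u⟩`. -/
def vee (v u : GF n) : GF n := fun I =>
  ∑ J ∈ (univ \ I).powerset, msgn I J * v J * u (I ∪ J)

/-- The ℂ-bilinear (non-Hermitian) inner product for which the basis monomials are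
orthonormal. -/
def ginner (u v : GF n) : ℂ := ∑ S : Finset (Fin n), u S * v S

/-- Componentwise complex conjugation. -/
def gconj (u : GF n) : GF n := fun S => (starRingEnd ℂ) (u S)

/-- Projection onto the degree-`l` part. -/
def proj (l : ℕ) (u : GF n) : GF n := fun S => if S.card = l then u S else 0

/-- `u` is homogeneous of degree `l` (an element of `Λ^l`). -/
def IsGrade (l : ℕ) (u : GF n) : Prop := ∀ S : Finset (Fin n), S.card ≠ l → u S = 0

/-- The basis one-form `dx^j`. -/
def dxe (j : Fin n) : GF n := fun S => if S = {j} then 1 else 0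

/-- The one-form with components `c j`. -/
def oneG (c : Fin n → ℂ) : GF n := fun S => ∑ j, if S = {j} then c j else 0

/-- `Σ_l (-1)^l u^l`. -/
def altSign (u : GF n) : GF n := fun S => (-1 : ℂ) ^ S.card * u S

/-- Exterior derivative `du = Σ_j dx^j ∧ ∂_j u`, expressed in terms of the family of
partial derivatives `D j = ∂_j u` at a point. -/
def gd (D : Fin n → GF n) : GF n := fun S => ∑ j, wedge (dxe j) (D j) S

/-- Coderivative `δu = (-1)^l Σ_j dx^j ∨ ∂_j u` (degreewise on graded forms), expressed
in terms of the family of partial derivatives `D j = ∂_j u` at a point. -/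
def gdel (D : Fin n → GF n) : GF n := fun S =>
  (-1 : ℂ) ^ (S.card + 1) * ∑ j, vee (dxe j) (D j) S

/-- Classical partial derivative `∂_{x^j}` of a complex-valued function. -/
def pd (j : Fin n) (f : Pt n → ℂ) : Pt n → ℂ := fun x => fderiv ℝ f x (Pi.single j 1)

/-- Componentwise classical partial derivatives of a graded form. -/
def Dcl (φ : Form n) : Fin n → Form n := fun j x S => pd j (fun y => φ y S) x

/-- A test function: smooth and compactly supported. -/
def IsTest (φ : Pt n → ℂ) : Prop := ContDiff ℝ (⊤ : ℕ∞) φ ∧ HasCompactSupport φ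

/-- A graded form all of whose components are test functions. -/
def TestForm (φ : Form n) : Prop := ∀ S : Finset (Fin n), IsTest fun x => φ x S

/-- `f ∈ L²_loc(ℝⁿ)`. -/
def L2loc (f : Pt n → ℂ) : Prop :=
  AEStronglyMeasurable f (volume : Measure (Pt n)) ∧
    ∀ K : Set (Pt n), IsCompact K → IntegrableOn (fun x => ‖f x‖ ^ 2) K volume

/-- `g` is the weak `j`-th partial derivative of `f` on `ℝⁿ`. -/
def HasWeakPD (j : Fin n) (f g : Pt n → ℂ) : Prop :=
  ∀ φ : Pt n → ℂ, IsTest φ → ∫ x, g x * φ x = -∫ x, f x * pd j φ x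

/-- All components of the graded form `w` belong to `H¹_loc(ℝⁿ)`, with weak partial
derivatives given componentwise by the family `Dw`. -/
def H1locWith (w : Form n) (Dw : Fin n → Form n) : Prop :=
  (∀ S : Finset (Fin n), L2loc fun x => w x S) ∧
    (∀ (j : Fin n) (S : Finset (Fin n)),
      HasWeakPD j (fun x => w x S) fun x => Dw j x S) ∧
    ∀ (j : Fin n) (S : Finset (Fin n)), L2loc fun x => Dw j x S

open scoped symmDiff SchwartzMap LineDeriv Laplacian ContDiff

/-- The sign of the `S`-component of `dx^j ∧ u` if `j ∈ S`, and of the `S`-component of the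
`dx^j ∨ u` term of the coderivative if `j ∉ S`; both equal `(-1)^{#{k ∈ S : k ≤ j} + 1}`. -/
def cliffordSign (j : Fin n) (S : Finset (Fin n)) : ℂ :=
  -∏ k ∈ S, if k ≤ j then -1 else 1

/-- Clifford multiplication by `dx^j`: the coefficient of `∂_j` in `d + δ`. -/
def clifford (j : Fin n) : GF n →ₗ[ℂ] GF n where
  toFun u S := cliffordSign j S * u (S ∆ {j})
  map_add' u v := by ext S; exact mul_add ..
  map_smul' c u := by ext S; exact mul_left_comm ..

lemma clifford_apply (j : Fin n) (u : GF n) (S : Finset (Fin n)) :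
    clifford j u S = cliffordSign j S * u (S ∆ {j}) := rfl

lemma symmDiff_singleton_of_mem {α : Type*} [DecidableEq α] {j : α} {S : Finset α} (hj : j ∈ S) :
    S ∆ {j} = S \ {j} :=
  symmDiff_of_ge (singleton_subset_iff.2 hj)

lemma symmDiff_singleton_of_notMem {α : Type*} [DecidableEq α] {j : α} {S : Finset α} (hj : j ∉ S) :
    S ∆ {j} = S ∪ {j} :=
  (disjoint_singleton_right.2 hj).symmDiff_eq_sup

lemma msgn_singleton_left (j : Fin n) (S : Finset (Fin n)) :
    msgn {j} S = (-1) ^ #{k ∈ S | k < j} := by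
  rw [msgn, singleton_product, filter_map, card_map]
  rfl

lemma msgn_singleton_right (j : Fin n) (S : Finset (Fin n)) :
    msgn S {j} = (-1) ^ #{k ∈ S | j < k} := by
  rw [msgn, product_singleton, filter_map, card_map]
  rfl

lemma cliffordSign_eq_pow (j : Fin n) (S : Finset (Fin n)) :
    cliffordSign j S = (-1) ^ (#{k ∈ S | k ≤ j} + 1) := by
  simp [cliffordSign, prod_ite, pow_succ]

lemma cliffordSign_of_mem {j : Fin n} {S : Finset (Fin n)} (hj : j ∈ S) :
    cliffordSign j S = msgn {j} (S \ {j}) := by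
  have hfilter : {k ∈ S | k ≤ j} = insert j {k ∈ S \ {j} | k < j} := by grind
  rw [cliffordSign_eq_pow, msgn_singleton_left, hfilter, card_insert_of_notMem (by simp),
    add_assoc, pow_add]
  norm_num

lemma cliffordSign_eq_neg_one_pow_mul_msgn (j : Fin n) (S : Finset (Fin n)) :
    cliffordSign j S = (-1) ^ (#S + 1) * msgn S {j} := by
  have hfilter : {k ∈ S | j < k} = {k ∈ S | ¬k ≤ j} := by simp
  rw [cliffordSign_eq_pow, msgn_singleton_right, hfilter,
    ← card_filter_add_card_filter_not (s := S) (· ≤ j), add_right_comm, pow_add _ _ #_, mul_assoc,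
    ← mul_pow]
  simp

lemma wedge_dxe (j : Fin n) (u : GF n) (S : Finset (Fin n)) :
    wedge (dxe j) u S = if j ∈ S then msgn {j} (S \ {j}) * u (S \ {j}) else 0 := by
  simp [wedge, dxe, ite_mul]

lemma vee_dxe (j : Fin n) (u : GF n) (S : Finset (Fin n)) :
    vee (dxe j) u S = if j ∈ S then 0 else msgn S {j} * u (S ∪ {j}) := by
  simp [vee, dxe, ite_mul]

lemma gd_add_gdel (D : Fin n → GF n) : gd D + gdel D = ∑ j, clifford j (D j) := by
  ext S
  simp only [Pi.add_apply, gd, gdel, Finset.sum_apply, mul_sum, ← sum_add_distrib]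
  refine sum_congr rfl fun j _ => ?_
  rw [wedge_dxe, vee_dxe, clifford_apply]
  by_cases hj : j ∈ S
  · simp [hj, cliffordSign_of_mem, symmDiff_singleton_of_mem]
  · simp [hj, cliffordSign_eq_neg_one_pow_mul_msgn, symmDiff_singleton_of_notMem, mul_assoc]

lemma cliffordSign_symmDiff (i j : Fin n) (S : Finset (Fin n)) :
    cliffordSign i (S ∆ {j}) = (if j ≤ i then -1 else 1) * cliffordSign i S := by
  unfold cliffordSign
  by_cases hj : j ∈ S
  · rw [symmDiff_singleton_of_mem hj, sdiff_singleton_eq_erase, ← mul_prod_erase S _ hj]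
    split_ifs <;> ring
  · rw [symmDiff_singleton_of_notMem hj, union_singleton, prod_insert hj, mul_neg]

lemma cliffordSign_mul_self (j : Fin n) (S : Finset (Fin n)) :
    cliffordSign j S * cliffordSign j S = 1 := by
  rw [cliffordSign_eq_pow, ← mul_pow]
  simp

lemma clifford_anticomm (i j : Fin n) (u : GF n) :
    clifford i (clifford j u) + clifford j (clifford i u) = if i = j then (-2 : ℂ) • u else 0 := by
  ext S
  simp only [Pi.add_apply, clifford_apply, cliffordSign_symmDiff]
  obtain rfl | hij := eq_or_ne i j
  · rw [symmDiff_symmDiff_cancel_right]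
    simp only [le_refl, if_true, Pi.smul_apply, smul_eq_mul]
    linear_combination -2 * u S * cliffordSign_mul_self i S
  · rw [symmDiff_right_comm S {j}]
    rcases lt_or_gt_of_ne hij with h | h <;>
    · simp only [h.le, h.not_ge, hij, if_true, if_false, Pi.zero_apply]
      ring

lemma sum_clifford_clifford_of_symm (H : Fin n → Fin n → GF n) (hH : ∀ i k, H i k = H k i) :
    ∑ i, ∑ k, clifford i (clifford k (H i k)) = -∑ i, H i i := by
  have hswap : ∑ i, ∑ k, clifford i (clifford k (H i k)) =
      ∑ i, ∑ k, clifford k (clifford i (H i k)) := by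
    rw [sum_comm]
    simp only [hH]
  have htwice : (2 : ℂ) • ∑ i, ∑ k, clifford i (clifford k (H i k)) = (2 : ℂ) • -∑ i, H i i := by
    rw [two_smul]
    nth_rewrite 2 [hswap]
    simp only [← sum_add_distrib, clifford_anticomm, sum_ite_eq, mem_univ, if_true, neg_smul,
      smul_neg, smul_sum, sum_neg_distrib]
  exact smul_right_injective _ two_ne_zero htwice

lemma ginner_eq_dotProduct (u w : GF n) : ginner u w = u ⬝ᵥ w := rfl

lemma ginner_clifford_left (j : Fin n) (u w : GF n) :
    ginner (clifford j u) w = -ginner u (clifford j w) := by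
  simp only [ginner, clifford_apply, ← sum_neg_distrib]
  refine Fintype.sum_equiv (symmDiff_left_involutive {j}).toPerm _ _ fun S => ?_
  simp only [Function.Involutive.coe_toPerm, cliffordSign_symmDiff, symmDiff_symmDiff_cancel_right,
    le_refl, if_true]
  ring

lemma pd_contDiff {f : Pt n → ℂ} (hf : ContDiff ℝ ∞ f) (j : Fin n) : ContDiff ℝ ∞ (pd j f) :=
  (hf.fderiv_right (m := ∞) le_rfl).clm_apply contDiff_const

lemma pd_comm {f : Pt n → ℂ} (hf : ContDiff ℝ ∞ f) (i k : Fin n) (x : Pt n) :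
    pd i (pd k f) x = pd k (pd i f) x := by
  have hd : DifferentiableAt ℝ (fderiv ℝ f) x :=
    (hf.fderiv_right (m := ∞) le_rfl).differentiable (by simp) x
  have hpd (a b : Fin n) :
      pd a (pd b f) x = fderiv ℝ (fderiv ℝ f) x (Pi.single a 1) (Pi.single b 1) := by
    unfold pd
    simp [fderiv_clm_apply hd (differentiableAt_const _)]
  have hsymm : IsSymmSndFDerivAt ℝ f x :=
    hf.contDiffAt.isSymmSndFDerivAt
      (by rw [minSmoothness_of_isRCLikeNormedField]; exact WithTop.coe_le_coe.2 le_top)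
  rw [hpd, hpd, hsymm]

lemma Dcl_eq_fderiv {φ : Form n} {x : Pt n} (hφ : DifferentiableAt ℝ φ x) (j : Fin n) :
    Dcl φ j x = fderiv ℝ φ x (Pi.single j 1) := by
  ext S
  rw [fderiv_pi fun S => differentiableAt_pi.1 hφ S]
  rfl

lemma contDiff_Dcl {φ : Form n} (hφ : ContDiff ℝ ∞ φ) (j : Fin n) : ContDiff ℝ ∞ (Dcl φ j) :=
  contDiff_pi.2 fun S => pd_contDiff (contDiff_pi.1 hφ S) j

/-- The Hodge–Dirac operator `d + δ`, written through Clifford multiplication. -/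
def dirac (φ : Form n) : Form n := fun x => ∑ j, clifford j (Dcl φ j x)

lemma contDiff_dirac {φ : Form n} (hφ : ContDiff ℝ ∞ φ) : ContDiff ℝ ∞ (dirac φ) :=
  ContDiff.sum fun j _ => contDiff_pi.2 fun S =>
    contDiff_const.mul (contDiff_pi.1 (contDiff_Dcl hφ j) (S ∆ {j}))

lemma dirac_smul {χ : Pt n → ℂ} {φ : Form n} {x : Pt n} (hχ : DifferentiableAt ℝ χ x)
    (hφ : DifferentiableAt ℝ φ x) :
    dirac (fun y => χ y • φ y) x = χ x • dirac φ x + ∑ j, pd j χ x • clifford j (φ x) := by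
  have hDcl (j : Fin n) :
      Dcl (fun y => χ y • φ y) j x = χ x • Dcl φ j x + pd j χ x • φ x := by
    rw [Dcl_eq_fderiv (hχ.fun_smul hφ), Dcl_eq_fderiv hφ, fderiv_fun_smul hχ hφ]
    rfl
  simp only [dirac, hDcl, map_add, map_smul, sum_add_distrib, smul_sum]

lemma Dcl_dirac {φ : Form n} (hφ : ContDiff ℝ ∞ φ) (i : Fin n) (x : Pt n) :
    Dcl (dirac φ) i x = ∑ k, clifford k (Dcl (Dcl φ k) i x) := by
  ext S
  have hd (k : Fin n) (T : Finset (Fin n)) : DifferentiableAt ℝ (fun y => Dcl φ k y T) x :=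
    (contDiff_pi.1 (contDiff_Dcl hφ k) T).differentiable (by simp) x
  simp only [Dcl.eq_def (dirac φ), pd, dirac, Finset.sum_apply, clifford_apply]
  rw [fderiv_fun_sum fun k _ => (hd k _).const_mul _, _root_.sum_apply]
  refine sum_congr rfl fun k _ => ?_
  rw [fderiv_const_mul (hd k _)]
  rfl

lemma dirac_dirac {φ : Form n} (hφ : ContDiff ℝ ∞ φ) (x : Pt n) :
    dirac (dirac φ) x = -∑ k, Dcl (Dcl φ k) k x := by
  rw [dirac]
  simp only [Dcl_dirac hφ, map_sum]
  refine sum_clifford_clifford_of_symm (fun i k => Dcl (Dcl φ k) i x) fun i k => ?_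
  ext S
  exact pd_comm (contDiff_pi.1 hφ S) i k x

lemma Dcl_single (S : Finset (Fin n)) (ψ : Pt n → ℂ) (k : Fin n) :
    Dcl (fun x => Pi.single S (ψ x)) k = fun x => Pi.single S (pd k ψ x) := by
  ext x T
  obtain rfl | hT := eq_or_ne T S
  · simp [Dcl]
  · simp [Dcl, hT, pd]

lemma ginner_single (u : GF n) (S : Finset (Fin n)) (a : ℂ) :
    ginner u (Pi.single S a) = u S * a := by
  rw [ginner_eq_dotProduct, dotProduct_single]

lemma ginner_dirac_single (u : GF n) (S : Finset (Fin n)) (ψ : Pt n → ℂ) (x : Pt n) :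
    ginner u (dirac (fun y => Pi.single S (ψ y)) x) = -∑ k, clifford k u S * pd k ψ x := by
  simp only [dirac, Dcl_single, ginner_eq_dotProduct, dotProduct_sum]
  simp only [← ginner_eq_dotProduct, ← ginner_single, ginner_clifford_left, sum_neg_distrib,
    neg_neg]

lemma integral_mul_laplacian_of_weak_dirac {w f : Form n}
    (hwf : ∀ φ : Form n, ContDiff ℝ ∞ φ →
      ∫ x, ginner (f x) (φ x) = ∫ x, ginner (w x) (dirac φ x))
    (S : Finset (Fin n)) {ψ : Pt n → ℂ} (hψ : ContDiff ℝ ∞ ψ) :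
    ∫ x, w x S * ∑ k, pd k (pd k ψ) x = ∫ x, ∑ k, clifford k (f x) S * pd k ψ x := by
  have hφ : ContDiff ℝ ∞ fun x => (Pi.single S (ψ x) : GF n) :=
    (ContinuousLinearMap.single ℝ (fun _ => ℂ) S).contDiff.comp hψ
  have hdd (x : Pt n) : ginner (w x) (dirac (dirac fun y => Pi.single S (ψ y)) x) =
      -(w x S * ∑ k, pd k (pd k ψ) x) := by
    simp only [dirac_dirac hφ, Dcl_single, ginner_eq_dotProduct, dotProduct_neg, dotProduct_sum,
      mul_sum]
    simp only [← ginner_eq_dotProduct, ginner_single]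
  have h := hwf _ (contDiff_dirac hφ)
  simp only [ginner_dirac_single, hdd, integral_neg, neg_inj] at h
  exact h.symm

lemma IsTest.mul {f g : Pt n → ℂ} (hf : IsTest f) (hg : ContDiff ℝ ∞ g) :
    IsTest fun x => f x * g x :=
  ⟨hf.1.mul hg, hf.2.mul_right⟩

lemma IsTest.pd {f : Pt n → ℂ} (hf : IsTest f) (j : Fin n) : IsTest (pd j f) :=
  ⟨pd_contDiff hf.1 j, hf.2.fderiv_apply (𝕜 := ℝ) _⟩

lemma IsTest.smul_form {χ : Pt n → ℂ} {φ : Form n} (hχ : IsTest χ) (hφ : ContDiff ℝ ∞ φ) :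
    TestForm fun x => χ x • φ x :=
  fun S => hχ.mul (contDiff_pi.1 hφ S)

lemma L2loc.const_mul {f : Pt n → ℂ} (hf : L2loc f) (c : ℂ) : L2loc fun x => c * f x := by
  refine ⟨hf.1.const_mul c, fun K hK => ?_⟩
  simp only [norm_mul, mul_pow]
  exact (hf.2 K hK).const_mul _

lemma L2loc.memLp_restrict {f : Pt n → ℂ} (hf : L2loc f) {K : Set (Pt n)} (hK : IsCompact K) :
    MemLp f 2 (volume.restrict K) :=
  (memLp_two_iff_integrable_sq_norm hf.1.restrict).2 (hf.2 K hK)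

lemma L2loc.locallyIntegrable {f : Pt n → ℂ} (hf : L2loc f) : LocallyIntegrable f volume :=
  locallyIntegrable_iff.2 fun K hK => by
    have := isFiniteMeasure_restrict.2 (hK.measure_lt_top (μ := (volume : Measure (Pt n)))).ne
    exact (hf.memLp_restrict hK).integrable one_le_two

lemma L2loc.mul_test {f χ : Pt n → ℂ} (hf : L2loc f) (hχ : IsTest χ) :
    MemLp (fun x => f x * χ x) 2 volume := by
  have hχ_top : MemLp χ ⊤ (volume.restrict (tsupport χ)) :=
    (hχ.1.continuous.memLp_of_hasCompactSupport hχ.2).restrict _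
  have hK : MemLp (fun x => f x * χ x) 2 (volume.restrict (tsupport χ)) :=
    hχ_top.mul (hf.memLp_restrict hχ.2)
  rw [← memLp_indicator_iff_restrict (isClosed_tsupport χ).measurableSet] at hK
  rwa [Set.indicator_eq_self.2] at hK
  exact (Function.support_mul_subset_right f χ).trans (subset_tsupport χ)

lemma integrable_ginner {u φ : Form n} (hu : ∀ S, L2loc fun x => u x S) (hφ : TestForm φ) :
    Integrable (fun x => ginner (u x) (φ x)) volume :=
  integrable_finsetSum _ fun S _ =>
    (hu S).locallyIntegrable.integrable_smul_right_of_hasCompactSupport (hφ S).1.continuous (hφ S).2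

lemma weak_dirac_smul {u g : Form n} (hu : ∀ S, L2loc fun x => u x S)
    (hg : ∀ S, L2loc fun x => g x S)
    (hweak : ∀ φ : Form n, TestForm φ →
      ∫ x, ginner (g x) (φ x) = ∫ x, ginner (u x) (dirac φ x))
    {χ : Pt n → ℂ} (hχ : IsTest χ) {φ : Form n} (hφ : ContDiff ℝ ∞ φ) :
    ∫ x, ginner (χ x • g x + ∑ j, pd j χ x • clifford j (u x)) (φ x) =
      ∫ x, ginner (χ x • u x) (dirac φ x) := by
  have hleibniz (x : Pt n) : ginner (u x) (dirac (fun y => χ y • φ y) x) =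
      ginner (χ x • u x) (dirac φ x) - ginner (∑ j, pd j χ x • clifford j (u x)) (φ x) := by
    rw [dirac_smul (hχ.1.differentiable (by simp) x) (hφ.differentiable (by simp) x)]
    simp only [ginner_eq_dotProduct, dotProduct_add, dotProduct_sum, dotProduct_smul,
      smul_dotProduct, sum_dotProduct]
    simp only [← ginner_eq_dotProduct, ginner_clifford_left, smul_neg, sum_neg_distrib,
      sub_neg_eq_add]
  have hu_int : Integrable fun x => ginner (χ x • u x) (dirac φ x) := by
    simpa [ginner_eq_dotProduct] using integrable_ginner hu (hχ.smul_form (contDiff_dirac hφ))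
  have hcl_int : Integrable fun x => ginner (∑ j, pd j χ x • clifford j (u x)) (φ x) := by
    simp only [ginner_eq_dotProduct, sum_dotProduct, smul_dotProduct, ← dotProduct_smul]
    exact integrable_finsetSum _ fun j _ =>
      integrable_ginner (fun S => (hu _).const_mul _) ((hχ.pd j).smul_form hφ)
  have h := hweak _ (hχ.smul_form hφ)
  simp only [hleibniz, integral_sub hu_int hcl_int] at h
  have hadd (x : Pt n) : ginner (χ x • g x + ∑ j, pd j χ x • clifford j (u x)) (φ x) =
      ginner (g x) (χ x • φ x) + ginner (∑ j, pd j χ x • clifford j (u x)) (φ x) := by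
    simp only [ginner_eq_dotProduct, add_dotProduct, smul_dotProduct, dotProduct_smul]
  simp only [hadd]
  rw [integral_add (integrable_ginner hg (hχ.smul_form hφ)) hcl_int, h, sub_add_cancel]

section Sobolev

open TemperedDistribution

variable {E F ι : Type*} [NormedAddCommGroup E] [InnerProductSpace ℝ E] [FiniteDimensional ℝ E]
  [MeasurableSpace E] [BorelSpace E] [NormedAddCommGroup F] [InnerProductSpace ℂ F]

lemma besselPotential_two_apply (f : 𝓢'(E, F)) :
    besselPotential E F 2 f = f - (((2 * Real.pi) ^ 2)⁻¹ : ℂ) • Δ f := by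
  have hsymbol : (fun x : E => (((1 + ‖x‖ ^ 2) ^ ((2 : ℝ) / 2) : ℝ) : ℂ)) =
      (fun _ => 1) + fun x : E => Complex.ofReal (‖x‖ ^ 2) := by
    ext x
    simp
  have hlap : (((2 * Real.pi) ^ 2)⁻¹ : ℂ) • Δ f =
      -fourierMultiplierCLM F (fun x ↦ Complex.ofReal (‖x‖ ^ 2)) f := by
    rw [laplacian_eq_fourierMultiplierCLM, ← Complex.coe_smul]
    simp
  rw [hlap, sub_neg_eq_add, besselPotential, hsymbol]
  simp only [fourierMultiplierCLM_apply]
  rw [smulLeftCLM_add (by fun_prop) (by fun_prop)]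
  simp

variable [CompleteSpace F]

lemma memSobolev_add_two_of_laplacian {s : ℝ} {p : ENNReal} [Fact (1 ≤ p)] {f : 𝓢'(E, F)}
    (hf : MemSobolev s p f) (hΔf : MemSobolev s p (Δ f)) : MemSobolev (s + 2) p f := by
  rw [add_comm, ← memSobolev_besselPotential_iff, besselPotential_two_apply]
  exact hf.sub (hΔf.smul _)

lemma memSobolev_add_one_of_laplacian_eq_sum [Fintype ι] {s : ℝ} {f : 𝓢'(E, F)}
    {G : ι → 𝓢'(E, F)} {m : ι → E} (hf : MemSobolev s 2 f)
    (hG : ∀ k, MemSobolev s 2 (G k)) (hΔf : Δ f = ∑ k, ∂_{m k} (G k)) :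
    MemSobolev (s + 1) 2 f := by
  have hsum : MemSobolev (s - 1) 2 (Δ f) :=
    hΔf ▸ sum_induction _ _ (fun _ _ => MemSobolev.add) (memSobolev_fun_zero E F _ 2)
      fun k _ => (hG k).lineDerivOp
  convert memSobolev_add_two_of_laplacian (hf.mono (by linarith)) hsum using 1
  ring

lemma toTemperedDistribution_toLp_apply {p : ENNReal} [Fact (1 ≤ p)] {f : E → F}
    (hf : MemLp f p volume) (ψ : 𝓢(E, ℂ)) :
    Lp.toTemperedDistribution (hf.toLp f) ψ = ∫ x, ψ x • f x := by
  rw [Lp.toTemperedDistribution_apply]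
  refine integral_congr_ae (hf.coeFn_toLp.mono fun x hx => ?_)
  simp only [hx]

lemma exists_memLp_lineDeriv_of_laplacian [Fintype ι] {f : E → F} {G : ι → E → F} {m : ι → E}
    (hf : MemLp f 2 volume) (hG : ∀ k, MemLp (G k) 2 volume)
    (hΔf : ∀ ψ : 𝓢(E, ℂ), ∫ x, Δ ψ x • f x = ∑ k, ∫ x, ∂_{m k} ψ x • G k x) (v : E) :
    ∃ h : E → F, MemLp h 2 volume ∧
      ∀ ψ : 𝓢(E, ℂ), ∫ x, ψ x • h x = -∫ x, ∂_{v} ψ x • f x := by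
  set T : 𝓢'(E, F) := Lp.toTemperedDistribution (hf.toLp f) with hT
  set R : ι → 𝓢'(E, F) := fun k => -Lp.toTemperedDistribution ((hG k).toLp (G k)) with hR
  have hΔT : Δ T = ∑ k, ∂_{m k} (R k) := by
    ext ψ
    simp [hT, hR, laplacian_apply_apply, toTemperedDistribution_toLp_apply, hΔf,
      -Lp.toTemperedDistribution_apply, integral_neg]
  have hT1 : MemSobolev (0 + 1) 2 T :=
    memSobolev_add_one_of_laplacian_eq_sum (memSobolev_zero_iff.2 ⟨_, hT⟩)
      (fun k => (memSobolev_zero_iff.2 ⟨_, rfl⟩).neg) hΔT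
  obtain ⟨h, hh⟩ := memSobolev_zero_iff.1 (by simpa using hT1.lineDerivOp (m := v))
  refine ⟨h, Lp.memLp h, fun ψ => ?_⟩
  have hψ := congr($hh ψ)
  rw [lineDerivOp_apply_apply, map_neg, hT, toTemperedDistribution_toLp_apply,
    Lp.toTemperedDistribution_apply] at hψ
  exact hψ.symm

end Sobolev

lemma pd_comp_toLp (Ψ : 𝓢(EuclideanSpace ℝ (Fin n), ℂ)) (j : Fin n) :
    pd j (fun x => Ψ (WithLp.toLp 2 x)) =
      fun x => ∂_{EuclideanSpace.basisFun (Fin n) ℝ j} Ψ (WithLp.toLp 2 x) := by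
  ext x
  rw [SchwartzMap.lineDerivOp_apply_eq_fderiv, pd]
  exact congr($((EuclideanSpace.equiv (Fin n) ℝ).symm.comp_right_fderiv (f := Ψ) (x := x)) _)

lemma sum_pd_pd_comp_toLp (Ψ : 𝓢(EuclideanSpace ℝ (Fin n), ℂ)) (x : Pt n) :
    ∑ k, pd k (pd k fun x => Ψ (WithLp.toLp 2 x)) x = Δ Ψ (WithLp.toLp 2 x) := by
  simp [pd_comp_toLp, SchwartzMap.laplacian_eq_sum (EuclideanSpace.basisFun (Fin n) ℝ)]

lemma memLp_pd (ψ : 𝓢(Pt n, ℂ)) (k : Fin n) : MemLp (pd k ψ) 2 volume := by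
  have hpd : pd k ψ = ∂_{(Pi.single k 1 : Pt n)} ψ :=
    funext fun x => (SchwartzMap.lineDerivOp_apply_eq_fderiv _ ψ x).symm
  rw [hpd]
  exact SchwartzMap.memLp _ 2 volume

lemma integral_comp_toLp (u : EuclideanSpace ℝ (Fin n) → ℂ) :
    ∫ x : Pt n, u (WithLp.toLp 2 x) = ∫ x, u x :=
  (PiLp.volume_preserving_toLp (Fin n)).integral_comp
    (MeasurableEquiv.toLp 2 _).measurableEmbedding u

lemma exists_hasWeakPD_of_laplacian {f : Pt n → ℂ} {G : Fin n → Pt n → ℂ}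
    (hf : MemLp f 2 volume) (hG : ∀ k, MemLp (G k) 2 volume)
    (hΔf : ∀ ψ : 𝓢(Pt n, ℂ),
      ∫ x, f x * ∑ k, pd k (pd k ψ) x = ∫ x, ∑ k, G k x * pd k ψ x) (j : Fin n) :
    ∃ h : Pt n → ℂ, HasWeakPD j f h ∧ MemLp h 2 volume := by
  set b := EuclideanSpace.basisFun (Fin n) ℝ
  set e := EuclideanSpace.equiv (Fin n) ℝ
  have he : MeasurePreserving e := PiLp.volume_preserving_ofLp (Fin n)
  have he_toLp (x : Pt n) : e (WithLp.toLp 2 x) = x := rfl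
  have hΔ (Ψ : 𝓢(EuclideanSpace ℝ (Fin n), ℂ)) :
      ∫ x, Δ Ψ x • f (e x) = ∑ k, ∫ x, ∂_{b k} Ψ x • G k (e x) := by
    set ψ : 𝓢(Pt n, ℂ) := SchwartzMap.compCLMOfContinuousLinearEquiv ℂ e.symm Ψ
    have hψ : ⇑ψ = fun x => Ψ (WithLp.toLp 2 x) := rfl
    have h := hΔf ψ
    have hint (k : Fin n) : Integrable fun x => G k x * pd k ψ x :=
      (hG k).integrable_mul (memLp_pd ψ k)
    rw [integral_finsetSum _ fun k _ => hint k] at h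
    simp only [hψ, sum_pd_pd_comp_toLp] at h
    simp only [pd_comp_toLp] at h
    simpa [← integral_comp_toLp, he_toLp, mul_comm, b] using h
  obtain ⟨h, hh, hhf⟩ := exists_memLp_lineDeriv_of_laplacian (hf.comp_measurePreserving he)
    (fun k => (hG k).comp_measurePreserving he) hΔ (b j)
  refine ⟨fun x => h (WithLp.toLp 2 x), fun φ hφ => ?_,
    hh.comp_measurePreserving (PiLp.volume_preserving_toLp (Fin n))⟩
  set Ψ := (hφ.2.comp_homeomorph e.toHomeomorph).toSchwartzMap (hφ.1.comp e.contDiff)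
  have hφΨ : φ = fun x => Ψ (WithLp.toLp 2 x) := rfl
  rw [hφΨ, pd_comp_toLp]
  simpa [← integral_comp_toLp, he_toLp, mul_comm, b] using hhf Ψ

lemma exists_ae_eq_on_of_ae_eq_on_inter {α β ι : Type*} [Countable ι] [MeasurableSpace α]
    {μ : Measure α} {s : ι → Set α} {f : ι → α → β} (hs : ⋃ i, s i = Set.univ)
    (hf : ∀ i j, ∀ᵐ x ∂μ, x ∈ s i → x ∈ s j → f i x = f j x) :
    ∃ g : α → β, ∀ i, ∀ᵐ x ∂μ, x ∈ s i → g x = f i x := by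
  choose i hi using fun x => Set.mem_iUnion.1 (hs ▸ Set.mem_univ x)
  refine ⟨fun x => f (i x) x, fun j => ?_⟩
  filter_upwards [ae_all_iff.2 fun k => hf k j] with x hx hxj
  exact hx (i x) (hi x) hxj

lemma pd_of_notMem_tsupport {φ : Pt n → ℂ} {x : Pt n} (hx : x ∉ tsupport φ) (j : Fin n) :
    pd j φ x = 0 := by
  rw [pd, fderiv_of_notMem_tsupport ℝ hx]
  rfl

lemma HasWeakPD.const_mul {j : Fin n} {f h : Pt n → ℂ} (hfh : HasWeakPD j f h) (c : ℂ) :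
    HasWeakPD j (fun x => c * f x) fun x => c * h x := fun φ hφ => by
  simp only [mul_assoc, integral_const_mul, hfh φ hφ, mul_neg]

lemma HasWeakPD.ae_eq_on_of_eqOn {j : Fin n} {f₁ f₂ h₁ h₂ : Pt n → ℂ} {U : Set (Pt n)}
    (hU : IsOpen U) (hf : Set.EqOn f₁ f₂ U) (hfh₁ : HasWeakPD j f₁ h₁)
    (hfh₂ : HasWeakPD j f₂ h₂) (hh₁ : LocallyIntegrable h₁ volume)
    (hh₂ : LocallyIntegrable h₂ volume) : ∀ᵐ x, x ∈ U → h₁ x = h₂ x := by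
  have hzero : ∀ᵐ x, x ∈ U → (h₁ - h₂) x = 0 := by
    refine hU.ae_eq_zero_of_integral_contDiff_smul_eq_zero
      ((hh₁.sub hh₂).locallyIntegrableOn U) fun ρ hρ hρ_supp hρU => ?_
    have htest : IsTest fun x => (ρ x : ℂ) :=
      ⟨Complex.ofRealCLM.contDiff.comp hρ, hρ_supp.comp_left Complex.ofReal_zero⟩
    have hint (h : Pt n → ℂ) (hh : LocallyIntegrable h volume) : Integrable fun x => h x * ρ x :=
      hh.integrable_smul_right_of_hasCompactSupport htest.1.continuous htest.2
    have hpd : ∀ x, f₁ x * pd j (fun x => (ρ x : ℂ)) x = f₂ x * pd j (fun x => (ρ x : ℂ)) x := by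
      intro x
      by_cases hx : x ∈ U
      · rw [hf hx]
      · have : x ∉ tsupport fun x => (ρ x : ℂ) := fun hx' =>
          hx (hρU (tsupport_comp_subset Complex.ofReal_zero ρ hx'))
        rw [pd_of_notMem_tsupport this, mul_zero, mul_zero]
    calc ∫ x, ρ x • (h₁ - h₂) x = ∫ x, (h₁ x * ρ x - h₂ x * ρ x) := by
          simp only [Pi.sub_apply, Complex.real_smul, mul_comm (ρ _ : ℂ), sub_mul]
      _ = 0 := by
          rw [integral_sub (hint h₁ hh₁) (hint h₂ hh₂), hfh₁ _ htest, hfh₂ _ htest]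
          simp only [hpd, sub_self]
  exact hzero.mono fun x hx hxU => sub_eq_zero.1 (hx hxU)

lemma l2loc_of_memLp {f : Pt n → ℂ} (hf : MemLp f 2 volume) : L2loc f :=
  ⟨hf.1, fun _ _ => ((memLp_two_iff_integrable_sq_norm hf.1).1 hf).integrableOn⟩

lemma exists_isTest_eqOn_one_ball (r : ℝ) :
    ∃ χ : Pt n → ℂ, IsTest χ ∧ Set.EqOn χ 1 (Metric.ball 0 r) := by
  let ρ : ContDiffBump (0 : Pt n) := ⟨max r 1, max r 1 + 1, by positivity, by simp⟩
  refine ⟨fun x => ρ x, ⟨Complex.ofRealCLM.contDiff.comp ρ.contDiff,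
    ρ.hasCompactSupport.comp_left Complex.ofReal_zero⟩, fun x hx => ?_⟩
  have hxρ : x ∈ Metric.closedBall 0 ρ.rIn :=
    Metric.ball_subset_closedBall (Metric.ball_subset_ball (le_max_left ..) hx)
  simp [ρ.one_of_mem_closedBall hxρ]

lemma exists_subset_ball_natCast {K : Set (Pt n)} (hK : IsCompact K) :
    ∃ N : ℕ, K ⊆ Metric.ball 0 N := by
  obtain ⟨r, hr⟩ := hK.isBounded.subset_ball 0
  obtain ⟨N, hN⟩ := exists_nat_ge r
  exact ⟨N, hr.trans (Metric.ball_subset_ball hN)⟩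

lemma l2loc_of_ae_eq_on_ball {H : Pt n → ℂ} {h : ℕ → Pt n → ℂ} (hh : ∀ N, L2loc (h N))
    (hH : ∀ N : ℕ, ∀ᵐ x, x ∈ Metric.ball 0 (N : ℝ) → H x = h N x) : L2loc H := by
  have hres (N : ℕ) : h N =ᵐ[volume.restrict (Metric.ball 0 (N : ℝ))] H :=
    (ae_restrict_iff' Metric.isOpen_ball.measurableSet).2
      ((hH N).mono fun x hx hxN => (hx hxN).symm)
  refine ⟨?_, fun K hK => ?_⟩
  · rw [← Measure.restrict_univ (μ := volume), ← Metric.iUnion_ball_nat 0,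
      aestronglyMeasurable_iUnion_iff]
    exact fun N => (hh N).1.restrict.congr (hres N)
  · obtain ⟨N, hKN⟩ := exists_subset_ball_natCast hK
    refine ((hh N).2 K hK).congr ?_
    filter_upwards [ae_restrict_of_ae_restrict_of_subset hKN (hres N)] with x hx
    rw [hx]

lemma exists_hasWeakPD_of_forall_isTest_mul {j : Fin n} {f : Pt n → ℂ}
    (hf : ∀ χ, IsTest χ → ∃ h, HasWeakPD j (fun x => χ x * f x) h ∧ L2loc h) :
    ∃ h, HasWeakPD j f h ∧ L2loc h := by
  choose χ hχ hχ_one using fun N : ℕ => exists_isTest_eqOn_one_ball (n := n) N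
  choose h hfh hh using fun N => hf (χ N) (hχ N)
  have hχf (N : ℕ) : Set.EqOn (fun x => χ N x * f x) f (Metric.ball 0 N) := fun x hx => by
    simp [hχ_one N hx]
  have hcompat (M N : ℕ) :
      ∀ᵐ x, x ∈ Metric.ball 0 (M : ℝ) → x ∈ Metric.ball 0 (N : ℝ) → h M x = h N x := by
    have hMN := HasWeakPD.ae_eq_on_of_eqOn (Metric.isOpen_ball.inter Metric.isOpen_ball)
      (fun x hx => (hχf M hx.1).trans (hχf N hx.2).symm) (hfh M) (hfh N)
      (hh M).locallyIntegrable (hh N).locallyIntegrable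
    exact hMN.mono fun x hx hxM hxN => hx ⟨hxM, hxN⟩
  obtain ⟨H, hH⟩ := exists_ae_eq_on_of_ae_eq_on_inter (Metric.iUnion_ball_nat 0) hcompat
  refine ⟨H, fun φ hφ => ?_, l2loc_of_ae_eq_on_ball hh hH⟩
  obtain ⟨N, hN⟩ := exists_subset_ball_natCast hφ.2
  have hHφ : ∀ᵐ x, H x * φ x = h N x * φ x := (hH N).mono fun x hx => by
    by_cases hxφ : x ∈ tsupport φ
    · rw [hx (hN hxφ)]
    · simp [image_eq_zero_of_notMem_tsupport hxφ]
  have hfφ (x : Pt n) : χ N x * f x * pd j φ x = f x * pd j φ x := by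
    by_cases hxφ : x ∈ tsupport φ
    · exact congr($(hχf N (hN hxφ)) * _)
    · simp [pd_of_notMem_tsupport hxφ]
  rw [integral_congr_ae hHφ, hfh N φ hφ]
  simp only [hfφ]

lemma exists_hasWeakPD_of_weak_dirac {u g : Form n} (hu : ∀ S, L2loc fun x => u x S)
    (hg : ∀ S, L2loc fun x => g x S)
    (hweak : ∀ φ : Form n, TestForm φ →
      ∫ x, ginner (g x) (φ x) = ∫ x, ginner (u x) (dirac φ x)) (S : Finset (Fin n)) (j : Fin n) :
    ∃ h : Pt n → ℂ, HasWeakPD j (fun x => u x S) h ∧ L2loc h := by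
  refine exists_hasWeakPD_of_forall_isTest_mul fun χ hχ => ?_
  set f : Form n := fun x => χ x • g x + ∑ i, pd i χ x • clifford i (u x)
  have hw : MemLp (fun x => χ x * u x S) 2 volume := by
    simpa only [mul_comm] using (hu S).mul_test hχ
  have hf (T : Finset (Fin n)) : MemLp (fun x => f x T) 2 volume := by
    have hsum := ((hg T).mul_test hχ).add (memLp_finsetSum univ fun i _ =>
      ((hu (T ∆ {i})).const_mul (cliffordSign i T)).mul_test (hχ.pd i))
    refine hsum.ae_eq (.of_forall fun x => ?_)
    simp [f, clifford_apply, mul_comm]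
  obtain ⟨h, hh, hh2⟩ := exists_hasWeakPD_of_laplacian hw
    (fun k => (hf (S ∆ {k})).const_mul (cliffordSign k S))
    (fun ψ => integral_mul_laplacian_of_weak_dirac (w := fun x => χ x • u x) (f := f)
      (fun φ hφ => weak_dirac_smul hu hg hweak hχ hφ) S ψ.smooth') j
  exact ⟨h, hh, l2loc_of_memLp hh2⟩

/-- Lemma A.6: local regularity for `d + δ`.  If a graded form `v`
with components in `L²_loc(ℝⁿ)` satisfies `(d+δ) Σ_l (−1)^l v^l = g` in the weak sense
for some graded form `g` with components in `L²_loc(ℝⁿ)`, then every component of `v`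
belongs to `H¹_loc(ℝⁿ)`. -/
theorem statement6 (hn : 2 ≤ n) (v g : Form n)
    (hv : ∀ S : Finset (Fin n), L2loc fun x => v x S)
    (hg : ∀ S : Finset (Fin n), L2loc fun x => g x S)
    (hweak : ∀ φ : Form n, TestForm φ →
      ∫ x, ginner (g x) (φ x)
        = ∫ x, ginner (altSign (v x))
            ((gd fun j => Dcl φ j x) + gdel fun j => Dcl φ j x)) :
    ∀ (S : Finset (Fin n)) (j : Fin n),
      ∃ h : Pt n → ℂ, HasWeakPD j (fun x => v x S) h ∧ L2loc h := by
  intro S j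
  have hcancel : (-1 : ℂ) ^ #S * (-1) ^ #S = 1 := by rw [← mul_pow]; simp
  have hdirac (φ : Form n) (hφ : TestForm φ) :
      ∫ x, ginner (g x) (φ x) = ∫ x, ginner (altSign (v x)) (dirac φ x) := by
    simpa only [gd_add_gdel, dirac] using hweak φ hφ
  obtain ⟨h, hvh, hh⟩ :=
    exists_hasWeakPD_of_weak_dirac (fun T => (hv T).const_mul ((-1) ^ #T)) hg hdirac S j
  refine ⟨fun x => (-1) ^ #S * h x, ?_, hh.const_mul _⟩
  simpa only [altSign, ← mul_assoc, hcancel, one_mul] using hvh.const_mul ((-1) ^ #S)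

end EMPaper
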